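/- arXiv:1907.04220 — 2 statements merged into one kernel-verified Lean document; each statement's English description precedes it below -/
import Mathlib

section
/- Let μ > 0 and σ > 0, set r = σ/μ, and let ρ_D(r) be the unique solution ρ ∈ [1,∞) of (ρ−1)³/(2ρ−1)² = r². Then the deterministic robust approximation ratio equals ρ_D(r): inf_{p ≥ 0} sup_{F ∈ 𝔽_{μ,σ}} OPT(F)/REV(p;F) = ρ_D(r). Moreover the infimum is attained at the price p* = ρ_D(r)·μ/(2ρ_D(r)−1); that is, OPT(F) ≤ ρ_D(r)·REV(p*;F) for every F ∈ 𝔽_{μ,σ}, while for every price p ≥ 0 and every ρ' < ρ_D(r) there exists F ∈ 𝔽_{μ,σ} with OPT(F) > ρ'·REV(p;F). -/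
open MeasureTheory

/-- Revenue of posting price `p` against valuation distribution `F`:
`REV(p;F) = p · P(X ≥ p)`. -/
noncomputable def rev (F : Measure ℝ) (p : ℝ) : ℝ :=
  p * (F (Set.Ici p)).toReal

/-- Optimal revenue `OPT(F) = sup_{p ≥ 0} p · P(X ≥ p)`. -/
noncomputable def opt (F : Measure ℝ) : ℝ :=
  ⨆ p ∈ Set.Ici (0 : ℝ), rev F p

/-- Revenue of a randomized pricing mechanism `A` (a measure over prices):
`REV(A;F) = E_{p∼A}[REV(p;F)]`. -/
noncomputable def mrev (A F : Measure ℝ) : ℝ :=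
  ∫ p, rev F p ∂A

/-- `F` is a `(μ,σ)`-distributed distribution: a probability measure on `[0,∞)`
with mean `m` and variance at most `s²`. -/
structure MeanVarLe (F : Measure ℝ) (m s : ℝ) : Prop where
  prob : IsProbabilityMeasure F
  supp : F (Set.Iio 0) = 0
  int_mean : Integrable (fun x => x) F
  int_sq : Integrable (fun x => x ^ 2) F
  mean : ∫ x, x ∂F = m
  var_le : ∫ x, (x - m) ^ 2 ∂F ≤ s ^ 2

/-- A randomized pricing mechanism: a probability measure over prices in `[0,∞)`. -/
def IsPriceMech (A : Measure ℝ) : Prop :=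
  IsProbabilityMeasure A ∧ A (Set.Iio 0) = 0

lemma rev_nonneg (F : Measure ℝ) {p : ℝ} (hp : 0 ≤ p) : 0 ≤ rev F p :=
  mul_nonneg hp ENNReal.toReal_nonneg

lemma integral_indicator_Ici (F : Measure ℝ) (t : ℝ) :
    ∫ x, (Set.Ici t).indicator (fun _ => (1 : ℝ)) x ∂F = (F (Set.Ici t)).toReal := by
  rw [integral_indicator measurableSet_Ici]
  simp [Measure.real]

namespace MeanVarLe

variable {F : Measure ℝ} {m s : ℝ}

lemma integral_quadratic (hF : MeanVarLe F m s) (a b : ℝ) :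
    ∫ x, (x - a) * (x - b) ∂F = ∫ x, (x - m) ^ 2 ∂F + (m - a) * (m - b) := by
  have := hF.prob
  have h1 := hF.int_mean
  have h2 := hF.int_sq
  have expand (u v : ℝ) : ∫ x, (x ^ 2 + u * x + v) ∂F = ∫ x, x ^ 2 ∂F + u * m + v := by
    have h3 : Integrable (fun x => x ^ 2 + u * x) F := h2.add (h1.const_mul u)
    rw [integral_add h3 (integrable_const v), integral_add h2 (h1.const_mul u), integral_const_mul, hF.mean]
    simp
  have e1 : (fun x : ℝ => (x - a) * (x - b)) =
      fun x => x ^ 2 + (-(a + b)) * x + a * b := by ext; ring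
  have e2 : (fun x : ℝ => (x - m) ^ 2) =
      fun x => x ^ 2 + (-(2 * m)) * x + m ^ 2 := by ext; ring
  rw [e1, e2, expand, expand]
  ring

lemma integrable_quadratic (hF : MeanVarLe F m s) (a b : ℝ) :
    Integrable (fun x => (x - a) * (x - b)) F := by
  have := hF.prob
  have e1 : (fun x : ℝ => (x - a) * (x - b)) =
      fun x => x ^ 2 + (-(a + b)) * x + a * b := by ext; ring
  rw [e1]
  exact (hF.int_sq.add (hF.int_mean.const_mul _)).add (integrable_const _)

/-- A Markov-type bound: revenue is at most the mean. -/
lemma rev_le_mean (hF : MeanVarLe F m s) (q : ℝ) : rev F q ≤ m := by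
  have := hF.prob
  have hnn : 0 ≤ᵐ[F] fun x => x := by
    rw [Filter.EventuallyLE, ae_iff]
    simpa [Set.Iio, not_le] using hF.supp
  have := mul_meas_ge_le_integral_of_nonneg hnn hF.int_mean q
  rw [hF.mean] at this
  exact this

lemma bddAbove_rev (hF : MeanVarLe F m s) :
    BddAbove (Set.range fun p => ⨆ _ : p ∈ Set.Ici (0 : ℝ), rev F p) := by
  refine ⟨m, ?_⟩
  rintro _ ⟨p, rfl⟩
  by_cases hp : 0 ≤ p
  · simpa [hp] using hF.rev_le_mean p
  · simpa [hp] using (rev_nonneg F le_rfl).trans (hF.rev_le_mean 0)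

lemma rev_le_opt (hF : MeanVarLe F m s) {q : ℝ} (hq : 0 ≤ q) : rev F q ≤ opt F := by
  have := le_ciSup hF.bddAbove_rev q
  simpa [hq, opt] using this

/-- Above the upper root `c`, revenue is dominated by the quadratic `(x - p) (x - c)`. -/
lemma rev_le_of_lt (hF : MeanVarLe F m s) {p c q : ℝ} (hp : 0 < p) (hpc : p < c)
    (hs : s ^ 2 ≤ (m - p) * (c - m)) (hq : c < q) :
    rev F q ≤ c * (F (Set.Ici p)).toReal := by
  have := hF.prob
  have hi (t : ℝ) : Integrable ((Set.Ici t).indicator fun _ => (1 : ℝ)) F :=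
    (integrable_const _).indicator measurableSet_Ici
  have key : ∫ x, (q * (Set.Ici q).indicator (fun _ => (1 : ℝ)) x
      - c * (Set.Ici p).indicator (fun _ => (1 : ℝ)) x) ∂F ≤
      ∫ x, (c - p)⁻¹ * ((x - p) * (x - c)) ∂F := by
    refine integral_mono (((hi q).const_mul q).sub ((hi p).const_mul c))
      ((hF.integrable_quadratic p c).const_mul _) fun x => ?_
    have hcp : 0 < c - p := sub_pos.2 hpc
    simp only
    rw [← div_eq_inv_mul, le_div_iff₀ hcp]
    rcases lt_or_ge x p with hx | hx
    · have hxq : ¬ q ≤ x := by linarith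
      simp only [Set.indicator, Set.mem_Ici, hxq, not_le.2 hx, if_false]
      nlinarith
    · rcases lt_or_ge x q with hxq | hxq
      · simp only [Set.indicator, Set.mem_Ici, not_le.2 hxq, hx, if_false, if_true]
        nlinarith [sq_nonneg (2 * x - p - c)]
      · simp only [Set.indicator, Set.mem_Ici, hxq, hx, if_true]
        nlinarith [mul_nonneg (sub_nonneg.2 (hq.le.trans hxq)) (sub_nonneg.2 (hq.le.trans hxq)),
          mul_le_mul_of_nonneg_right hxq hcp.le]
  rw [integral_sub ((hi q).const_mul q) ((hi p).const_mul c), integral_const_mul,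
    integral_const_mul, integral_const_mul, integral_indicator_Ici,
    integral_indicator_Ici, hF.integral_quadratic] at key
  have hv := hF.var_le
  have : (c - p)⁻¹ * (∫ x, (x - m) ^ 2 ∂F + (m - p) * (m - c)) ≤ 0 :=
    mul_nonpos_of_nonneg_of_nonpos (inv_nonneg.2 (sub_pos.2 hpc).le) (by nlinarith)
  unfold rev
  linarith

/-- A one-sided Chebyshev (Cantelli) inequality. -/
lemma le_mul_measure_Ici (hF : MeanVarLe F m s) {p c : ℝ} (hpc : p < c)
    (hs : s ^ 2 ≤ (m - p) * (c - m)) :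
    m - p ≤ (c - p) * (F (Set.Ici p)).toReal := by
  have := hF.prob
  have hi : Integrable ((Set.Ici p).indicator fun _ => (1 : ℝ)) F :=
    (integrable_const _).indicator measurableSet_Ici
  have key : ∫ x, ((c - p) ^ 2 - (c - p) ^ 2 * (Set.Ici p).indicator (fun _ => (1 : ℝ)) x) ∂F ≤
      ∫ x, (x - c) * (x - c) ∂F := by
    refine integral_mono ((integrable_const _).sub (hi.const_mul _))
      (hF.integrable_quadratic c c) fun x => ?_
    rcases lt_or_ge x p with hx | hx
    · simp only [Set.indicator, Set.mem_Ici, not_le.2 hx, if_false]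
      nlinarith
    · simp only [Set.indicator, Set.mem_Ici, hx, if_true]
      nlinarith [mul_self_nonneg (x - c)]
  rw [integral_sub (integrable_const _) (hi.const_mul _), integral_const_mul,
    integral_indicator_Ici,
    hF.integral_quadratic] at key
  simp only [integral_const, probReal_univ, one_smul] at key
  have hv := hF.var_le
  have : 0 < c - p := sub_pos.2 hpc
  refine le_of_mul_le_mul_left ?_ this
  nlinarith

lemma opt_le (hF : MeanVarLe F m s) {p c : ℝ} (hp : 0 < p) (hpc : p < c)
    (hs : s ^ 2 ≤ (m - p) * (c - m)) (hpm : p * (c - p) ≤ c * (m - p)) :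
    opt F ≤ c * (F (Set.Ici p)).toReal := by
  have := hF.prob
  have hmono {u v : ℝ} (h : u ≤ v) : (F (Set.Ici v)).toReal ≤ (F (Set.Ici u)).toReal :=
    ENNReal.toReal_mono (measure_ne_top _ _) (measure_mono (Set.Ici_subset_Ici.2 h))
  have hnn : 0 ≤ c * (F (Set.Ici p)).toReal :=
    mul_nonneg (hp.trans hpc).le ENNReal.toReal_nonneg
  refine ciSup_le fun q => ?_
  by_cases hq : 0 ≤ q
  swap
  · simpa [hq] using hnn
  simp only [Set.mem_Ici, hq, ciSup_unique]
  rcases lt_or_ge c q with hcq | hcq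
  · exact hF.rev_le_of_lt hp hpc hs hcq
  rcases le_total p q with hpq | hpq
  · exact mul_le_mul hcq (hmono hpq) ENNReal.toReal_nonneg (hp.trans hpc).le
  · have hle1 : (F (Set.Ici q)).toReal ≤ 1 := measureReal_le_one
    have h1 : rev F q ≤ p :=
      (mul_le_of_le_one_right hq hle1).trans hpq
    have h2 : p ≤ c * (F (Set.Ici p)).toReal := by
      have hcan := hF.le_mul_measure_Ici hpc hs
      have hcp := sub_pos.2 hpc
      have hc := hp.trans hpc
      refine le_of_mul_le_mul_right ?_ hcp
      nlinarith [mul_le_mul_of_nonneg_left hcan hc.le]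
    exact h1.trans h2

end MeanVarLe

/-- The distribution with mass `w` at `h` and mass `1 - w` at `x`. -/
noncomputable def twoPoint (w h x : ℝ) : Measure ℝ :=
  ENNReal.ofReal w • Measure.dirac h + ENNReal.ofReal (1 - w) • Measure.dirac x

lemma integrable_twoPoint (w h x : ℝ) (f : ℝ → ℝ) : Integrable f (twoPoint w h x) := by
  have hd (a : ℝ) : Integrable f (Measure.dirac a) := integrable_dirac (by simp)
  exact ((hd h).smul_measure ENNReal.ofReal_ne_top).add_measure
    ((hd x).smul_measure ENNReal.ofReal_ne_top)

lemma integral_twoPoint {w : ℝ} (hw0 : 0 ≤ w) (hw1 : w ≤ 1) (h x : ℝ) (f : ℝ → ℝ) :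
    ∫ y, f y ∂(twoPoint w h x) = w * f h + (1 - w) * f x := by
  have hd (a : ℝ) : Integrable f (Measure.dirac a) := integrable_dirac (by simp)
  rw [twoPoint, integral_add_measure ((hd h).smul_measure ENNReal.ofReal_ne_top)
    ((hd x).smul_measure ENNReal.ofReal_ne_top), integral_smul_measure, integral_smul_measure,
    integral_dirac, integral_dirac, ENNReal.toReal_ofReal hw0,
    ENNReal.toReal_ofReal (sub_nonneg.2 hw1)]
  rfl

lemma isProbabilityMeasure_twoPoint {w : ℝ} (hw0 : 0 ≤ w) (hw1 : w ≤ 1) (h x : ℝ) :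
    IsProbabilityMeasure (twoPoint w h x) := by
  constructor
  simp only [twoPoint, Measure.add_apply, Measure.smul_apply, measure_univ, smul_eq_mul, mul_one]
  rw [← ENNReal.ofReal_add hw0 (sub_nonneg.2 hw1)]
  simp

lemma meanVarLe_twoPoint {w h x m s : ℝ} (hw0 : 0 ≤ w) (hw1 : w ≤ 1) (hh : 0 ≤ h) (hx : 0 ≤ x)
    (hm : w * h + (1 - w) * x = m) (hs : w * (h - m) ^ 2 + (1 - w) * (x - m) ^ 2 ≤ s ^ 2) :
    MeanVarLe (twoPoint w h x) m s where
  prob := isProbabilityMeasure_twoPoint hw0 hw1 h x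
  supp := by simp [twoPoint, not_lt.2 hh, not_lt.2 hx]
  int_mean := integrable_twoPoint _ _ _ _
  int_sq := integrable_twoPoint _ _ _ _
  mean := by rw [integral_twoPoint hw0 hw1, hm]
  var_le := by rwa [integral_twoPoint hw0 hw1]

lemma rev_twoPoint_of_le {w h x p : ℝ} (hw0 : 0 ≤ w) (hw1 : w ≤ 1) (hx : p ≤ x) (hh : p ≤ h) :
    rev (twoPoint w h x) p = p := by
  rw [rev, twoPoint]
  simp only [Measure.add_apply, Measure.smul_apply, measurableSet_Ici, Measure.dirac_apply',
    smul_eq_mul, Set.indicator, Set.mem_Ici, hx, hh, if_true, Pi.one_apply, mul_one]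
  rw [← ENNReal.ofReal_add hw0 (sub_nonneg.2 hw1)]
  simp

lemma rev_twoPoint_of_lt {w h x p : ℝ} (hw0 : 0 ≤ w) (hx : x < p) (hh : p ≤ h) :
    rev (twoPoint w h x) p = p * w := by
  rw [rev, twoPoint]
  simp [not_le.2 hx, hh, hw0]

lemma rev_twoPoint_of_gt {w h x p : ℝ} (hx : x < p) (hh : h < p) :
    rev (twoPoint w h x) p = 0 := by
  rw [rev, twoPoint]
  simp [not_le.2 hx, not_le.2 hh]

/-- A two-point distribution with mean `m`, variance `s ^ 2` and lower atom `x`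
has upper atom `m + s ^ 2 / (m - x)`. -/
lemma exists_meanVarLe_of_lt {m s x p : ℝ} (hs : 0 < s) (hx : 0 ≤ x) (hxp : x < p) (hpm : p ≤ m) :
    ∃ F, MeanVarLe F m s ∧
      rev F p * ((m - x) ^ 2 + s ^ 2) = p * (m - x) ^ 2 ∧ x ≤ opt F ∧
      (m * (m - x) + s ^ 2) * (m - x) ≤ opt F * ((m - x) ^ 2 + s ^ 2) := by
  obtain ⟨u, hu⟩ : ∃ u, u = m - x := ⟨_, rfl⟩
  have hu0 : 0 < u := by linarith
  have hD : 0 < u ^ 2 + s ^ 2 := by positivity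
  obtain rfl : x = m - u := by linarith
  have hw0 : 0 ≤ u ^ 2 / (u ^ 2 + s ^ 2) := by positivity
  have hw1 : u ^ 2 / (u ^ 2 + s ^ 2) ≤ 1 := by
    rw [div_le_one hD]
    nlinarith
  have hm : 0 < m := by linarith
  have hmh : m ≤ m + s ^ 2 / u := le_add_of_nonneg_right (by positivity)
  have hF : MeanVarLe (twoPoint (u ^ 2 / (u ^ 2 + s ^ 2)) (m + s ^ 2 / u) (m - u)) m s := by
    refine meanVarLe_twoPoint hw0 hw1 (hm.le.trans hmh) hx ?_ (le_of_eq ?_)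
    · field_simp
      ring
    · field_simp
      ring
  refine ⟨_, hF, ?_, ?_, ?_⟩
  · rw [rev_twoPoint_of_lt hw0 hxp (hpm.trans hmh)]
    field_simp
    ring
  · have := hF.rev_le_opt hx
    rwa [rev_twoPoint_of_le hw0 hw1 le_rfl (by linarith)] at this
  · have := hF.rev_le_opt (hm.le.trans hmh)
    rw [rev_twoPoint_of_lt hw0 (by linarith) le_rfl] at this
    rw [sub_sub_cancel]
    refine le_trans (le_of_eq ?_) (mul_le_mul_of_nonneg_right this hD.le)
    field_simp

lemma exists_lt_of_continuous {f : ℝ → ℝ} (hf : Continuous f) {p : ℝ} (hp : 0 < p)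
    (hfp : 0 < f p) : ∃ x, 0 ≤ x ∧ x < p ∧ 0 < f x := by
  have h1 : ∀ᶠ x in nhdsWithin p (Set.Iio p), 0 < f x :=
    (hf.continuousAt.eventually (lt_mem_nhds hfp)).filter_mono nhdsWithin_le_nhds
  have h2 : ∀ᶠ x in nhdsWithin p (Set.Iio p), 0 < x :=
    (lt_mem_nhds hp).filter_mono nhdsWithin_le_nhds
  obtain ⟨x, hfx, hx0, hxp⟩ := (h1.and (h2.and self_mem_nhdsWithin)).exists
  exact ⟨x, hx0.le, hxp, hfx⟩

/-- Lower bound witnessed by two-point distributions whose lower atom lies just below `p`,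
comparing `p` with a price at the lower atom. -/
lemma exists_mul_rev_lt_opt_of_high {m s p k : ℝ} (hs : 0 < s) (hp : 0 < p) (hpm : p ≤ m)
    (h : k * (m - p) ^ 2 < (m - p) ^ 2 + s ^ 2) :
    ∃ F, MeanVarLe F m s ∧ k * rev F p < opt F := by
  obtain ⟨x, hx0, hxp, hx⟩ := exists_lt_of_continuous
    (f := fun x => x * ((m - x) ^ 2 + s ^ 2) - k * p * (m - x) ^ 2) (by fun_prop) hp
    (by nlinarith)
  obtain ⟨F, hF, hrev, hopt, -⟩ := exists_meanVarLe_of_lt hs hx0 hxp hpm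
  refine ⟨F, hF, lt_of_lt_of_le ?_ hopt⟩
  have hD : 0 < (m - x) ^ 2 + s ^ 2 := by positivity
  refine lt_of_mul_lt_mul_right ?_ hD.le
  rw [mul_assoc, hrev]
  linarith

/-- Lower bound witnessed by two-point distributions whose lower atom lies just below `p`,
comparing `p` with a price at the upper atom. -/
lemma exists_mul_rev_lt_opt_of_low {m s p k : ℝ} (hs : 0 < s) (hp : 0 < p) (hpm : p ≤ m)
    (h : k * p * (m - p) < m * (m - p) + s ^ 2) :
    ∃ F, MeanVarLe F m s ∧ k * rev F p < opt F := by
  obtain ⟨x, hx0, hxp, hx⟩ := exists_lt_of_continuous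
    (f := fun x => m * (m - x) + s ^ 2 - k * p * (m - x)) (by fun_prop) hp (by linarith)
  obtain ⟨F, hF, hrev, -, hopt⟩ := exists_meanVarLe_of_lt hs hx0 hxp hpm
  refine ⟨F, hF, ?_⟩
  have hD : 0 < (m - x) ^ 2 + s ^ 2 := by positivity
  refine lt_of_mul_lt_mul_right (lt_of_lt_of_le ?_ hopt) hD.le
  rw [mul_assoc, hrev]
  have : 0 < m - x := by linarith
  nlinarith [mul_pos hx this]

lemma exists_mul_rev_lt_opt_of_rev_eq_zero {m s p : ℝ} (hm : 0 < m) (hp : p = 0 ∨ m < p) (k : ℝ) :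
    ∃ F, MeanVarLe F m s ∧ k * rev F p < opt F := by
  have hF : MeanVarLe (twoPoint 1 m m) m s :=
    meanVarLe_twoPoint zero_le_one le_rfl hm.le hm.le (by ring) (by nlinarith [sq_nonneg s])
  have hrev : rev (twoPoint 1 m m) p = 0 := by
    rcases hp with rfl | hp
    · simp [rev]
    · exact rev_twoPoint_of_gt hp hp
  refine ⟨_, hF, ?_⟩
  have := hF.rev_le_opt hm.le
  rw [rev_twoPoint_of_le zero_le_one le_rfl le_rfl le_rfl] at this
  rw [hrev, mul_zero]
  linarith

/-- For `μ, σ > 0`, `r = σ/μ`, and `ρ` the unique solution in `[1,∞)` of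
`(ρ−1)³/(2ρ−1)² = r²`, the deterministic robust approximation ratio equals `ρ`:
`inf_{p ≥ 0} sup_{F ∈ 𝔽_{μ,σ}} OPT(F)/REV(p;F) = ρ` (ratios taken in `ℝ≥0∞`, so `c/0 = ∞`
for `c > 0`); the infimum is attained at `p* = ρμ/(2ρ−1)`, i.e. `OPT(F) ≤ ρ·REV(p*;F)` for
all `F ∈ 𝔽_{μ,σ}`, while for any price `p ≥ 0` and any `ρ' < ρ` some `F ∈ 𝔽_{μ,σ}` has
`OPT(F) > ρ'·REV(p;F)`. -/
theorem stmt0 (μ σ : ℝ) (hμ : 0 < μ) (hσ : 0 < σ) (r : ℝ) (hr : r = σ / μ)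
    (ρ : ℝ) (hρ1 : 1 ≤ ρ) (hρ2 : (ρ - 1) ^ 3 / (2 * ρ - 1) ^ 2 = r ^ 2) :
    (⨅ p : {p : ℝ // 0 ≤ p}, ⨆ F : {F : Measure ℝ // MeanVarLe F μ σ},
        ENNReal.ofReal (opt F.1) / ENNReal.ofReal (rev F.1 p.1)) = ENNReal.ofReal ρ ∧
    (∀ F : Measure ℝ, MeanVarLe F μ σ → opt F ≤ ρ * rev F (ρ * μ / (2 * ρ - 1))) ∧
    (∀ p : ℝ, 0 ≤ p → ∀ ρ' : ℝ, ρ' < ρ →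
      ∃ F : Measure ℝ, MeanVarLe F μ σ ∧ ρ' * rev F p < opt F) := by
  have hρ : 1 < ρ := by
    refine lt_of_le_of_ne hρ1 ?_
    rintro rfl
    have : 0 < r ^ 2 := by rw [hr]; positivity
    norm_num at hρ2
    exact this.ne hρ2
  have hden : 0 < 2 * ρ - 1 := by linarith
  obtain ⟨d, hd⟩ : ∃ d, d = μ / (2 * ρ - 1) := ⟨_, rfl⟩
  have hd0 : 0 < d := by rw [hd]; positivity
  have hμd : μ = (2 * ρ - 1) * d := by rw [hd]; field_simp
  have hstar : ρ * μ / (2 * ρ - 1) = ρ * d := by rw [hd]; ring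
  have hσd : σ ^ 2 = (ρ - 1) ^ 3 * d ^ 2 := by
    rw [hr, div_pow, div_eq_div_iff (by positivity) (by positivity)] at hρ2
    have : 0 < (2 * ρ - 1) ^ 2 := by positivity
    refine mul_right_cancel₀ this.ne' ?_
    rw [← hρ2, hμd]
    ring
  have hupper : ∀ F : Measure ℝ, MeanVarLe F μ σ →
      opt F ≤ ρ * rev F (ρ * μ / (2 * ρ - 1)) := by
    intro F hF
    rw [hstar, rev, ← mul_assoc]
    have hp : 0 < ρ * d := by positivity
    refine hF.opt_le hp (by nlinarith) (le_of_eq ?_) (le_of_eq ?_)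
    · rw [hσd, hμd]; ring
    · rw [hμd]; ring
  have hlower : ∀ p : ℝ, 0 ≤ p → ∀ ρ' : ℝ, ρ' < ρ →
      ∃ F : Measure ℝ, MeanVarLe F μ σ ∧ ρ' * rev F p < opt F := by
    intro p hp ρ' hρ'
    rcases hp.eq_or_lt with rfl | hp0
    · exact exists_mul_rev_lt_opt_of_rev_eq_zero hμ (.inl rfl) ρ'
    rcases lt_or_ge μ p with hpm | hpm
    · exact exists_mul_rev_lt_opt_of_rev_eq_zero hμ (.inr hpm) ρ'
    rcases le_total (ρ * d) p with hle | hle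
    · refine exists_mul_rev_lt_opt_of_high hσ hp0 hpm ?_
      rcases hpm.eq_or_lt with rfl | hlt
      · have : 0 < σ ^ 2 := by positivity
        simpa using this
      have h1 : (μ - p) ^ 2 ≤ ((ρ - 1) * d) ^ 2 :=
        pow_le_pow_left₀ (by linarith) (by linarith) 2
      have h2 : 0 < (μ - p) ^ 2 := pow_pos (by linarith) 2
      have h3 : (ρ - 1) * (μ - p) ^ 2 ≤ σ ^ 2 := by
        rw [hσd]
        nlinarith
      nlinarith
    · refine exists_mul_rev_lt_opt_of_low hσ hp0 hpm ?_
      have hpμ : 0 < μ - p := by nlinarith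
      have h1 : ρ * p * (μ - p) ≤ μ * (μ - p) + σ ^ 2 := by
        have hfac : μ * (μ - p) + σ ^ 2 - ρ * p * (μ - p) =
            (ρ * d - p) * ((ρ ^ 2 + ρ - 1) * d - ρ * p) := by
          rw [hσd, hμd]; ring
        have : 0 ≤ (ρ * d - p) * ((ρ ^ 2 + ρ - 1) * d - ρ * p) := by
          refine mul_nonneg (by linarith) ?_
          nlinarith
        linarith
      have h2 : ρ' * p * (μ - p) < ρ * p * (μ - p) := by gcongr
      linarith
  refine ⟨le_antisymm ?_ ?_, hupper, hlower⟩
  · refine iInf_le_of_le ⟨ρ * μ / (2 * ρ - 1), by positivity⟩ (iSup_le fun F => ?_)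
    refine ENNReal.div_le_of_le_mul ?_
    rw [← ENNReal.ofReal_mul (by linarith)]
    exact ENNReal.ofReal_le_ofReal (hupper F.1 F.2)
  · refine le_iInf fun p => le_of_forall_lt fun c hc => ?_
    obtain ⟨k, hck, hkρ⟩ := exists_between hc
    have hk : k ≠ ⊤ := (hkρ.trans ENNReal.ofReal_lt_top).ne
    obtain ⟨F, hF, hlt⟩ := hlower p.1 p.2 k.toReal
      ((ENNReal.lt_ofReal_iff_toReal_lt hk).1 hkρ)
    refine hck.trans_le (le_iSup_of_le ⟨F, hF⟩ ?_)
    have hnn : 0 ≤ k.toReal * rev F p.1 :=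
      mul_nonneg ENNReal.toReal_nonneg (rev_nonneg F p.2)
    have hopt : 0 < opt F := hnn.trans_lt hlt
    rw [ENNReal.le_div_iff_mul_le (.inr (ENNReal.ofReal_pos.2 hopt).ne')
      (.inl ENNReal.ofReal_ne_top)]
    calc k * ENNReal.ofReal (rev F p.1)
        = ENNReal.ofReal (k.toReal * rev F p.1) := by
          rw [ENNReal.ofReal_mul ENNReal.toReal_nonneg, ENNReal.ofReal_toReal hk]
      _ ≤ ENNReal.ofReal (opt F) := ENNReal.ofReal_le_ofReal hlt.le
end

section
/- Let F = F_1 × ⋯ × F_m be a product Borel probability distribution on [0,∞)^m where F_j has mean μ_j > 0 and variance at most σ_j². Set μ̄ = Σ_j μ_j, σ̄ = (Σ_j σ_j²)^{1/2}, r̄ = σ̄/μ̄, r_j = σ_j/μ_j and r_max = max_j r_j. Let F_Y be the distribution of the sum Y = v_1 + ⋯ + v_m of independent v_j ∼ F_j. Then selling the full bundle via the log-lottery P^log_{μ̄,σ̄} guarantees REV(P^log_{μ̄,σ̄};F_Y) ≥ OPT_m(F)/ρ(r̄), and moreover ρ(r̄) ≤ ρ(r_max). -/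
open MeasureTheory

/-- The log-lottery `P^log` with parameters `p1 ≤ p2`: the probability measure supported on
`[p1,p2]` whose cdf on `[p1,p2)` is
`x ↦ (p2·ln(x/p1) − (x−p1)) / (p2·ln(p2/p1) − (p2−p1))`
(for `p1 = p2` this is the point mass at `p1`). -/
structure IsLogLottery (A : Measure ℝ) (p1 p2 : ℝ) : Prop where
  prob : IsProbabilityMeasure A
  supp : A (Set.Icc p1 p2) = 1
  cdf : ∀ x ∈ Set.Ico p1 p2,
    A (Set.Iic x) = ENNReal.ofReal
      ((p2 * Real.log (x / p1) - (x - p1)) / (p2 * Real.log (p2 / p1) - (p2 - p1)))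

/-- A (direct revelation, possibly randomized) truthful selling mechanism for `m` items and
a single additive buyer: an allocation rule `alloc : [0,∞)^m → [0,1]^m` and a payment rule
`pay : [0,∞)^m → [0,∞)` satisfying incentive compatibility and individual rationality. -/
structure TruthfulMech (m : ℕ) where
  alloc : (Fin m → ℝ) → Fin m → ℝ
  pay : (Fin m → ℝ) → ℝ
  alloc_meas : Measurable alloc
  pay_meas : Measurable pay
  alloc_nonneg : ∀ v i, 0 ≤ alloc v i
  alloc_le_one : ∀ v i, alloc v i ≤ 1
  pay_nonneg : ∀ v, 0 ≤ pay v
  ic : ∀ v w : Fin m → ℝ, (∀ i, 0 ≤ v i) → (∀ i, 0 ≤ w i) →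
    (∑ i, alloc w i * v i) - pay w ≤ (∑ i, alloc v i * v i) - pay v
  ir : ∀ v : Fin m → ℝ, (∀ i, 0 ≤ v i) → 0 ≤ (∑ i, alloc v i * v i) - pay v

/-- Expected revenue of a truthful `m`-item mechanism on the joint distribution `F`. -/
noncomputable def mrevM {m : ℕ} (M : TruthfulMech m) (F : Measure (Fin m → ℝ)) : ℝ :=
  ∫ v, M.pay v ∂F

/-- Optimal revenue `OPT_m(F)`: the supremum of expected revenue over all truthful
mechanisms for `m` items. -/
noncomputable def optM (m : ℕ) (F : Measure (Fin m → ℝ)) : ℝ :=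
  ⨆ M : TruthfulMech m, mrevM M F

open ProbabilityTheory

/-- The function defining `ρ` is strictly increasing on `[1,∞)`. -/
theorem strictMonoOn_exp_div_sq :
    StrictMonoOn (fun x : ℝ => (2 * Real.exp (x - 1) - 1) / x ^ 2) (Set.Ici 1) := by
  have hderiv : ∀ x : ℝ, 1 ≤ x →
      HasDerivAt (fun x : ℝ => (2 * Real.exp (x - 1) - 1) / x ^ 2)
        (((2 * Real.exp (x - 1)) * x ^ 2 - (2 * Real.exp (x - 1) - 1) * (2 * x)) /
          (x ^ 2) ^ 2) x := by
    intro x hx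
    have h1 : HasDerivAt (fun x : ℝ => 2 * Real.exp (x - 1) - 1) (2 * Real.exp (x - 1)) x := by
      simpa using ((((hasDerivAt_id x).sub_const 1).exp).const_mul 2).sub_const 1
    have h2 : HasDerivAt (fun x : ℝ => x ^ 2) (2 * x) x := by
      simpa using hasDerivAt_pow 2 x
    exact h1.div h2 (by positivity)
  refine strictMonoOn_of_deriv_pos (convex_Ici 1)
    (fun x hx => (hderiv x hx).continuousAt.continuousWithinAt) fun x hx => ?_
  rw [interior_Ici, Set.mem_Ioi] at hx
  rw [(hderiv x hx.le).deriv]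
  have hexp : 1 - x + 1 < Real.exp (1 - x) := Real.add_one_lt_exp (by linarith)
  have hmul : Real.exp (1 - x) * Real.exp (x - 1) = 1 := by
    rw [← Real.exp_add]; simp
  have hpos : 0 < (x - 2) * Real.exp (x - 1) + 1 := by
    nlinarith [mul_lt_mul_of_pos_right hexp (Real.exp_pos (x - 1))]
  apply div_pos _ (by positivity)
  have : (2 * Real.exp (x - 1)) * x ^ 2 - (2 * Real.exp (x - 1) - 1) * (2 * x)
      = 2 * x * ((x - 2) * Real.exp (x - 1) + 1) := by ring
  rw [this]
  positivity

theorem MeanVarLe.ae_nonneg {F : Measure ℝ} {a s : ℝ} (h : MeanVarLe F a s) :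
    ∀ᵐ x ∂F, 0 ≤ x := by
  rw [ae_iff]
  simpa [Set.Iio_def] using h.supp

theorem MeanVarLe.ae_pi_nonneg {ι : Type*} [Fintype ι] {Fs : ι → Measure ℝ} {μs σs : ι → ℝ}
    (h : ∀ j, MeanVarLe (Fs j) (μs j) (σs j)) :
    ∀ᵐ v ∂(Measure.pi Fs), ∀ j, 0 ≤ v j := by
  have hprob : ∀ j, IsProbabilityMeasure (Fs j) := fun j => (h j).prob
  exact ae_all_iff.2 fun j =>
    (measurePreserving_eval Fs j).quasiMeasurePreserving.ae (h j).ae_nonneg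

theorem MeanVarLe.memLp_id {F : Measure ℝ} {a s : ℝ} (h : MeanVarLe F a s) :
    MemLp (fun x : ℝ => x) 2 F :=
  (memLp_two_iff_integrable_sq aestronglyMeasurable_id).2 h.int_sq

/-- The second moment is at most `a² + s²`. -/
theorem MeanVarLe.integral_sq_le {F : Measure ℝ} {a s : ℝ} (h : MeanVarLe F a s) :
    ∫ x, x ^ 2 ∂F ≤ a ^ 2 + s ^ 2 := by
  have := h.prob
  have hvar := variance_eq_sub h.memLp_id
  rw [variance_eq_integral aemeasurable_id', h.mean] at hvar
  have hle := h.var_le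
  simp only [Pi.pow_apply] at hvar
  linarith

/-- Means and variances add over the coordinates of a product distribution. -/
theorem MeanVarLe.map_sum_pi {ι : Type*} [Fintype ι] {Fs : ι → Measure ℝ} {μs σs : ι → ℝ}
    (h : ∀ j, MeanVarLe (Fs j) (μs j) (σs j)) :
    MeanVarLe ((Measure.pi Fs).map (fun v => ∑ j, v j)) (∑ j, μs j)
      (Real.sqrt (∑ j, σs j ^ 2)) := by
  have hprob : ∀ j, IsProbabilityMeasure (Fs j) := fun j => (h j).prob
  have hmeas : Measurable (fun v : ι → ℝ => ∑ j, v j) := by fun_prop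
  have hL2 : ∀ j, MemLp (fun v : ι → ℝ => v j) 2 (Measure.pi Fs) := fun j =>
    (h j).memLp_id.comp_measurePreserving (measurePreserving_eval Fs j)
  have hsumL2 : MemLp (fun v : ι → ℝ => ∑ j, v j) 2 (Measure.pi Fs) :=
    memLp_finsetSum _ fun j _ => hL2 j
  have hmean : ∫ v, ∑ j, v j ∂(Measure.pi Fs) = ∑ j, μs j := by
    rw [integral_finsetSum _ fun j _ => (hL2 j).integrable (by norm_num)]
    refine Finset.sum_congr rfl fun j _ => ?_
    exact (integral_comp_eval (μ := Fs) (i := j) (f := fun x : ℝ => x)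
      (by fun_prop)).trans (h j).mean
  have hvar : Var[fun v : ι → ℝ => ∑ j, v j; Measure.pi Fs] ≤ ∑ j, σs j ^ 2 := by
    have hsum := variance_sum_pi (μ := Fs) (X := fun _ x => x) fun j => (h j).memLp_id
    have hfun : (∑ i, fun ω : ι → ℝ => ω i) = fun v : ι → ℝ => ∑ j, v j := by
      ext v; simp
    rw [hfun] at hsum
    rw [hsum]
    refine Finset.sum_le_sum fun j _ => ?_
    rw [variance_eq_integral aemeasurable_id', (h j).mean]
    exact (h j).var_le
  refine ⟨Measure.isProbabilityMeasure_map hmeas.aemeasurable, ?_, ?_, ?_, ?_, ?_⟩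
  · rw [Measure.map_apply hmeas measurableSet_Iio]
    have hsub : (fun v : ι → ℝ => ∑ j, v j) ⁻¹' Set.Iio 0 ⊆ {v | ¬ ∀ j, 0 ≤ v j} :=
      fun v hv hall => absurd (Finset.sum_nonneg fun j _ => hall j) (not_le.2 hv)
    exact measure_mono_null hsub (ae_iff.1 (MeanVarLe.ae_pi_nonneg h))
  · exact (integrable_map_measure aestronglyMeasurable_id hmeas.aemeasurable).2
      (hsumL2.integrable (by norm_num))
  · exact (integrable_map_measure (by fun_prop) hmeas.aemeasurable).2 hsumL2.integrable_sq
  · rw [integral_map hmeas.aemeasurable (by fun_prop)]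
    exact hmean
  · rw [integral_map hmeas.aemeasurable (by fun_prop),
      Real.sq_sqrt (Finset.sum_nonneg fun j _ => sq_nonneg _)]
    rwa [variance_eq_integral hmeas.aemeasurable, hmean] at hvar

/-- By individual rationality the optimal revenue is at most the expected total value. -/
theorem optM_le_sum_mean {m : ℕ} {Fs : Fin m → Measure ℝ} {μs σs : Fin m → ℝ}
    (h : ∀ j, MeanVarLe (Fs j) (μs j) (σs j)) (hμ : 0 ≤ ∑ j, μs j) :
    optM m (Measure.pi Fs) ≤ ∑ j, μs j := by
  have hprob : ∀ j, IsProbabilityMeasure (Fs j) := fun j => (h j).prob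
  have hY := MeanVarLe.map_sum_pi h
  have hmeas : Measurable (fun v : Fin m → ℝ => ∑ j, v j) := by fun_prop
  refine Real.iSup_le (fun M => ?_) hμ
  rw [← hY.mean, integral_map hmeas.aemeasurable (by fun_prop)]
  refine integral_mono_of_nonneg (Filter.Eventually.of_forall M.pay_nonneg)
    ((integrable_map_measure aestronglyMeasurable_id hmeas.aemeasurable).1 hY.int_mean) ?_
  filter_upwards [MeanVarLe.ae_pi_nonneg h] with v hv
  have hle : ∑ i, M.alloc v i * v i ≤ ∑ i, v i :=
    Finset.sum_le_sum fun i _ => mul_le_of_le_one_left (hv i) (M.alloc_le_one v i)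
  linarith [M.ir v hv]

/-- The normalizing constant of the log-lottery is positive. -/
theorem logLottery_normalizer_pos {p1 p2 : ℝ} (hp1 : 0 < p1) (hlt : p1 < p2) :
    0 < p2 * Real.log (p2 / p1) - (p2 - p1) := by
  have hp2 : 0 < p2 := hp1.trans hlt
  have hlog := Real.log_lt_sub_one_of_pos (div_pos hp1 hp2) (div_lt_one hp2 |>.2 hlt).ne
  rw [← inv_div, Real.log_inv] at hlog
  have hcancel : p2 * (p2 / p1)⁻¹ = p1 := by field_simp
  nlinarith [mul_lt_mul_of_pos_left hlog hp2]

theorem lintegral_logLottery_density {p1 p2 D a : ℝ} (hp1 : 0 < p1) (hD : 0 < D)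
    (ha1 : p1 ≤ a) (ha2 : a ≤ p2) :
    ∫⁻ x in Set.Ioc p1 a, ENNReal.ofReal ((p2 / x - 1) / D) =
      ENNReal.ofReal ((p2 * Real.log (a / p1) - (a - p1)) / D) := by
  have hpos : ∀ x ∈ Set.uIcc p1 a, x ≠ 0 := fun x hx => by
    rw [Set.uIcc_of_le ha1] at hx
    exact (hp1.trans_le hx.1).ne'
  have hcont : ContinuousOn (fun x : ℝ => (p2 / x - 1) / D) (Set.uIcc p1 a) :=
    ((continuousOn_const.div continuousOn_id hpos).sub continuousOn_const).div_const D
  have hint : IntervalIntegrable (fun x : ℝ => (p2 / x - 1) / D) volume p1 a :=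
    hcont.intervalIntegrable
  rw [← ofReal_integral_eq_lintegral_ofReal
    ((intervalIntegrable_iff_integrableOn_Ioc_of_le ha1).1 hint),
    ← intervalIntegral.integral_of_le ha1,
    intervalIntegral.integral_eq_sub_of_hasDerivAt
      (f := fun x => (p2 * Real.log x - x) / D) _ hint]
  · rw [Real.log_div (hp1.trans_le ha1).ne' hp1.ne']
    congr 1
    ring
  · intro x hx
    have hd := (((Real.hasDerivAt_log (hpos x hx)).const_mul p2).sub (hasDerivAt_id x)).div_const D
    exact hd
  · filter_upwards [ae_restrict_mem measurableSet_Ioc] with x hx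
    have hx0 : 0 < x := hp1.trans hx.1
    have : 1 ≤ p2 / x := (one_le_div hx0).2 (hx.2.trans ha2)
    exact div_nonneg (by linarith) hD.le

/-- A nondegenerate log-lottery has density `x ↦ (p2/x - 1)/D` on `(p1, p2]`. -/
theorem IsLogLottery.eq_withDensity {A : Measure ℝ} {p1 p2 : ℝ} (hA : IsLogLottery A p1 p2)
    (hp1 : 0 < p1) (hlt : p1 < p2) :
    A = (volume.restrict (Set.Ioc p1 p2)).withDensity fun x =>
      ENNReal.ofReal ((p2 / x - 1) / (p2 * Real.log (p2 / p1) - (p2 - p1))) := by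
  have := hA.prob
  have hD := logLottery_normalizer_pos hp1 hlt
  refine Measure.ext_of_Iic _ _ fun a => ?_
  rw [withDensity_apply _ measurableSet_Iic, Measure.restrict_restrict measurableSet_Iic,
    Set.inter_comm, Set.Ioc_inter_Iic]
  rcases lt_or_ge a p1 with ha | ha
  · have hcompl : A (Set.Icc p1 p2)ᶜ = 0 := (prob_compl_eq_zero_iff measurableSet_Icc).2 hA.supp
    rw [Set.Ioc_eq_empty (not_lt.2 ((min_le_right _ _).trans ha.le)), Measure.restrict_empty,
      lintegral_zero_measure]
    have hsub : Set.Iic a ⊆ (Set.Icc p1 p2)ᶜ := fun x hx hmem =>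
      absurd (hmem.1.trans hx) (not_le.2 ha)
    exact measure_mono_null hsub hcompl
  rcases lt_or_ge a p2 with ha2 | ha2
  · rw [min_eq_right ha2.le, lintegral_logLottery_density hp1 hD ha ha2.le, hA.cdf a ⟨ha, ha2⟩]
  · rw [min_eq_left ha2, lintegral_logLottery_density hp1 hD hlt.le le_rfl, div_self hD.ne',
      ENNReal.ofReal_one]
    refine le_antisymm prob_le_one ?_
    rw [← hA.supp]
    exact measure_mono fun x hx => hx.2.trans ha2

/-- The log-lottery's revenue from a buyer of value `y` dominates a concave quadratic in `y`. -/
theorem IsLogLottery.quadratic_le {A : Measure ℝ} {p1 p2 : ℝ} (hA : IsLogLottery A p1 p2)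
    (hp1 : 0 < p1) (hlt : p1 < p2) (y : ℝ) :
    (p2 * (y - p1) - (y ^ 2 - p1 ^ 2) / 2) / (p2 * Real.log (p2 / p1) - (p2 - p1)) ≤
      ∫ p in Set.Iic y, p ∂A := by
  have hD := logLottery_normalizer_pos hp1 hlt
  have hdens := hA.eq_withDensity hp1 hlt
  set D := p2 * Real.log (p2 / p1) - (p2 - p1)
  have hint : ∫ p in Set.Iic y, p ∂A = ∫ p in Set.Ioc p1 (min p2 y), (p2 - p) / D := by
    rw [hdens, restrict_withDensity measurableSet_Iic,
      Measure.restrict_restrict measurableSet_Iic, Set.inter_comm, Set.Ioc_inter_Iic,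
      integral_withDensity_eq_integral_toReal_smul (by fun_prop) (by simp)]
    refine setIntegral_congr_fun measurableSet_Ioc fun p hp => ?_
    have hp0 : 0 < p := hp1.trans hp.1
    have hge : 1 ≤ p2 / p := (one_le_div hp0).2 (hp.2.trans (min_le_left _ _))
    simp only [smul_eq_mul]
    rw [ENNReal.toReal_ofReal (div_nonneg (by linarith) hD.le)]
    field_simp
  rw [hint]
  rcases lt_or_ge y p1 with hy | hy
  · rw [Set.Ioc_eq_empty (not_lt.2 ((min_le_right _ _).trans hy.le)), Measure.restrict_empty,
      integral_zero_measure]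
    exact div_nonpos_of_nonpos_of_nonneg (by nlinarith) hD.le
  · have hle : p1 ≤ min p2 y := le_min hlt.le hy
    have hval : ∫ p in p1..(min p2 y), (p2 - p) / D =
        (p2 * (min p2 y - p1) - ((min p2 y) ^ 2 - p1 ^ 2) / 2) / D := by
      rw [intervalIntegral.integral_div, intervalIntegral.integral_sub (by simp) (by simp)]
      simp [mul_comm]
    rw [← intervalIntegral.integral_of_le hle, hval]
    refine div_le_div_of_nonneg_right ?_ hD.le
    rcases le_total p2 y with h | h
    · rw [min_eq_left h]
      nlinarith [sq_nonneg (y - p2)]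
    · rw [min_eq_right h]

theorem mrev_eq_integral {A F : Measure ℝ} [IsFiniteMeasure A] [IsFiniteMeasure F]
    (hA : Integrable (fun p => p) A) :
    mrev A F = ∫ y, ∫ p in Set.Iic y, p ∂A ∂F := by
  have hmeas : MeasurableSet {z : ℝ × ℝ | z.1 ≤ z.2} :=
    measurableSet_le measurable_fst measurable_snd
  have hint : Integrable (Function.uncurry fun p y : ℝ => (Set.Iic y).indicator (fun p => p) p)
      (A.prod F) := by
    have h := (hA.comp_fst F).indicator hmeas
    refine h.congr (Filter.Eventually.of_forall fun z => ?_)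
    simp [Set.indicator, Function.uncurry]
  have hswap := integral_integral_swap hint
  simp only [integral_indicator measurableSet_Iic] at hswap
  rw [← hswap]
  refine integral_congr_ae (Filter.Eventually.of_forall fun p => ?_)
  have hfun : (fun y : ℝ => (Set.Iic y).indicator (fun p => p) p) =
      (Set.Ici p).indicator fun _ => p := by
    ext y; simp [Set.indicator]
  simp only [rev]
  rw [hfun, integral_indicator measurableSet_Ici, setIntegral_const, smul_eq_mul, mul_comm]
  rfl

theorem IsLogLottery.ae_mem_Icc {A : Measure ℝ} {p1 p2 : ℝ} (hA : IsLogLottery A p1 p2) :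
    ∀ᵐ p ∂A, p ∈ Set.Icc p1 p2 := by
  have := hA.prob
  exact (mem_ae_iff_prob_eq_one measurableSet_Icc).2 hA.supp

/-- The log-lottery guarantees revenue `p1` on every distribution with the prescribed mean and
variance bound. -/
theorem IsLogLottery.le_mrev {A F : Measure ℝ} {p1 p2 a s : ℝ} (hA : IsLogLottery A p1 p2)
    (hp1 : 0 < p1) (hle : p1 ≤ p2) (hmean : p1 * (1 + Real.log (p2 / p1)) = a)
    (hsq : p1 * (2 * p2 - p1) = a ^ 2 + s ^ 2) (hF : MeanVarLe F a s) :
    p1 ≤ mrev A F := by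
  have := hA.prob
  have := hF.prob
  rcases hle.eq_or_lt with rfl | hlt
  · rw [div_self hp1.ne', Real.log_one] at hmean
    have ha : p1 = a := by linarith
    subst ha
    have hs : s ^ 2 = 0 := by linarith
    have hvar := hF.var_le
    rw [hs] at hvar
    have hint : Integrable (fun x => (x - p1) ^ 2) F :=
      (hF.memLp_id.sub (memLp_const p1)).integrable_sq
    have hzero := (integral_eq_zero_iff_of_nonneg (fun x => sq_nonneg (x - p1)) hint).1
      (le_antisymm hvar (integral_nonneg fun x => sq_nonneg _))
    have hIci : F (Set.Ici p1) = 1 := by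
      refine (mem_ae_iff_prob_eq_one measurableSet_Ici).1 ?_
      filter_upwards [hzero] with x hx
      have : x - p1 = 0 := by simpa using hx
      exact (sub_eq_zero.1 this).ge
    have hrev : mrev A F = p1 := by
      have hae : (fun p => rev F p) =ᵐ[A] fun _ => p1 := by
        filter_upwards [hA.ae_mem_Icc] with p hp
        rw [le_antisymm hp.2 hp.1, rev, hIci, ENNReal.toReal_one, mul_one]
      rw [mrev, integral_congr_ae hae]
      simp
    exact hrev.ge
  · have hD := logLottery_normalizer_pos hp1 hlt
    have hAint : Integrable (fun p => p) A := by
      refine Integrable.of_mem_Icc p1 p2 aemeasurable_id hA.ae_mem_Icc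
    have hquad := hA.quadratic_le hp1 hlt
    rw [mrev_eq_integral hAint]
    have hmeas : MeasurableSet {z : ℝ × ℝ | z.2 ≤ z.1} :=
      measurableSet_le measurable_snd measurable_fst
    have hRint : Integrable (fun y => ∫ p in Set.Iic y, p ∂A) F := by
      have h := ((hAint.comp_snd F).indicator hmeas).integral_prod_left
      refine h.congr (Filter.Eventually.of_forall fun y => ?_)
      simp only
      rw [← integral_indicator measurableSet_Iic]
      rfl
    have hI1 : Integrable (fun y => p2 * (y - p1)) F :=
      (hF.int_mean.sub (integrable_const p1)).const_mul p2
    have hI2 : Integrable (fun y => (y ^ 2 - p1 ^ 2) / 2) F :=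
      (hF.int_sq.sub (integrable_const (p1 ^ 2))).div_const 2
    refine le_trans ?_ (integral_mono ((hI1.sub hI2).div_const _) hRint hquad)
    simp only [Pi.sub_apply]
    rw [integral_div, integral_sub hI1 hI2, integral_const_mul, integral_div,
      integral_sub hF.int_mean (integrable_const p1),
      integral_sub hF.int_sq (integrable_const (p1 ^ 2)), hF.mean, le_div_iff₀ hD]
    simp only [integral_const, probReal_univ, one_smul]
    have hm2 := hF.integral_sq_le
    rw [← hsq] at hm2
    nlinarith

/-- The coefficient of variation of a sum is at most the largest one among its summands. -/
theorem sqrt_sum_sq_div_sum_le {ι : Type*} [Fintype ι] [Nonempty ι] {μs σs : ι → ℝ} {r : ℝ}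
    (hμ : ∀ j, 0 < μs j) (hσ : ∀ j, 0 ≤ σs j) (hr : ∀ j, σs j / μs j ≤ r) :
    Real.sqrt (∑ j, σs j ^ 2) / ∑ j, μs j ≤ r := by
  have hsum : 0 < ∑ j, μs j := Finset.sum_pos (fun j _ => hμ j) Finset.univ_nonempty
  have hr0 : 0 ≤ r := by
    obtain ⟨j⟩ := ‹Nonempty ι›
    exact (div_nonneg (hσ j) (hμ j).le).trans (hr j)
  rw [div_le_iff₀ hsum]
  refine Real.sqrt_le_iff.2 ⟨by positivity, ?_⟩
  calc ∑ j, σs j ^ 2 ≤ ∑ j, (r * μs j) ^ 2 := by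
        refine Finset.sum_le_sum fun j _ => pow_le_pow_left₀ (hσ j) ?_ 2
        exact (div_le_iff₀ (hμ j)).1 (hr j)
    _ ≤ (∑ j, r * μs j) ^ 2 :=
        Finset.sum_sq_le_sq_sum_of_nonneg fun j _ => mul_nonneg hr0 (hμ j).le
    _ = (r * ∑ j, μs j) ^ 2 := by rw [Finset.mul_sum]

/-- Let `F = F_1 × ⋯ × F_m` be a product distribution on `[0,∞)^m` with
`F_j` of mean `μ_j > 0` and variance at most `σ_j²`. With `μ̄ = Σ_j μ_j`,
`σ̄ = (Σ_j σ_j²)^{1/2}`, `r̄ = σ̄/μ̄` and `r_max = max_j σ_j/μ_j`, selling the full bundle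
via the log-lottery `P^log_{μ̄,σ̄}` guarantees
`REV(P^log_{μ̄,σ̄};F_Y) ≥ OPT_m(F)/ρ(r̄)`, where `F_Y` is the distribution of the sum of
the independent item values; moreover `ρ(r̄) ≤ ρ(r_max)`. -/
theorem stmt15 (m : ℕ) (hm : 0 < m) (μs σs : Fin m → ℝ)
    (hμs : ∀ j, 0 < μs j) (hσs : ∀ j, 0 ≤ σs j)
    (Fs : Fin m → Measure ℝ) (hmarg : ∀ j, MeanVarLe (Fs j) (μs j) (σs j))
    (μbar σbar rbar rmax : ℝ)
    (hμbar : μbar = ∑ j, μs j) (hσbar : σbar = Real.sqrt (∑ j, (σs j) ^ 2))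
    (hrbar : rbar = σbar / μbar)
    (hrmax : IsGreatest (Set.range fun j => σs j / μs j) rmax)
    (ρ1 : ℝ) (hρ11 : 1 ≤ ρ1) (hρ12 : (2 * Real.exp (ρ1 - 1) - 1) / ρ1 ^ 2 = rbar ^ 2 + 1)
    (ρ2 : ℝ) (hρ21 : 1 ≤ ρ2) (hρ22 : (2 * Real.exp (ρ2 - 1) - 1) / ρ2 ^ 2 = rmax ^ 2 + 1)
    (A : Measure ℝ)
    (hA : ∃ p1 p2 : ℝ, 0 < p1 ∧ p1 ≤ p2 ∧
      p1 * (1 + Real.log (p2 / p1)) = μbar ∧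
      p1 * (2 * p2 - p1) = μbar ^ 2 + σbar ^ 2 ∧
      IsLogLottery A p1 p2) :
    optM m (Measure.pi Fs) / ρ1 ≤
      mrev A ((Measure.pi Fs).map (fun v => ∑ j, v j)) ∧
    ρ1 ≤ ρ2 := by
  have : Nonempty (Fin m) := ⟨⟨0, hm⟩⟩
  have hμpos : 0 < μbar := hμbar ▸ Finset.sum_pos (fun j _ => hμs j) Finset.univ_nonempty
  constructor
  · obtain ⟨p1, p2, hp1, hle, hmean, hsq, hlot⟩ := hA
    have hF := MeanVarLe.map_sum_pi hmarg
    rw [← hμbar, ← hσbar] at hF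
    have hrev := hlot.le_mrev hp1 hle hmean hsq hF
    have hp2 : 0 < p2 := hp1.trans_le hle
    have hlog : 0 ≤ Real.log (p2 / p1) := Real.log_nonneg ((one_le_div hp1).2 hle)
    have hρ : ρ1 = 1 + Real.log (p2 / p1) := by
      refine strictMonoOn_exp_div_sq.injOn hρ11
        (show (1 : ℝ) ≤ 1 + Real.log (p2 / p1) by linarith) ?_
      rw [hρ12, hrbar, add_sub_cancel_left, Real.exp_log (div_pos hp2 hp1)]
      have hne : 1 + Real.log (p2 / p1) ≠ 0 := by linarith
      have h1 : (σbar / μbar) ^ 2 + 1 = p1 * (2 * p2 - p1) / μbar ^ 2 := by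
        rw [hsq]
        field_simp
        ring
      rw [h1, ← hmean]
      field_simp
    have hopt := optM_le_sum_mean hmarg (hμbar ▸ hμpos.le)
    rw [← hμbar] at hopt
    refine le_trans ?_ hrev
    rw [div_le_iff₀ (by linarith), hρ, hmean]
    exact hopt
  · have hr : rbar ≤ rmax := by
      rw [hrbar, hσbar, hμbar]
      exact sqrt_sum_sq_div_sum_le hμs hσs fun j => hrmax.2 ⟨j, rfl⟩
    have hr0 : 0 ≤ rbar := by
      rw [hrbar, hσbar]
      exact div_nonneg (Real.sqrt_nonneg _) hμpos.le
    refine (strictMonoOn_exp_div_sq.le_iff_le hρ11 hρ21).1 ?_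
    rw [hρ12, hρ22]
    gcongr
end
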